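/- For every n ≥ 3 and every integer k (with the convention D_{m,j}^* = 0 for j < 0): D_{n,k}^{0,1} = 2(k-1)·D_{n-1,k}^{0,1} + (2n-2k+1)·D_{n-1,k-1}^{0,1} + D_{n-1,k-1}^1 + D_{n-1,k-2}^{≥2} + D_{n-1,k-1}^{0,≥2}. -/

import Mathlib

/-- A signed permutation of `{1,…,n}`, encoded as an (unsigned) permutation of
`Fin n` together with a choice of sign for each position.  The associated
word is `π_1 π_2 ⋯ π_n` where `π_j = ± σ(j)`. -/
abbrev SignedPerm (n : ℕ) := Equiv.Perm (Fin n) × (Fin n → Bool)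

namespace SignedPerm

/-- The letter `π_j` of the word of `p`, for `1 ≤ j ≤ n` (and `0` otherwise). -/
def word {n : ℕ} (p : SignedPerm n) (j : ℕ) : ℤ :=
  if h : 1 ≤ j ∧ j ≤ n then
    (if p.2 ⟨j - 1, by omega⟩ then -1 else 1) * ((p.1 ⟨j - 1, by omega⟩ : ℕ) + 1)
  else 0

/-- The letter `π_j`, with the type `D` convention `π_0 = -π_2`. -/
def entry {n : ℕ} (p : SignedPerm n) (j : ℕ) : ℤ :=
  if j = 0 then -(p.word 2) else p.word j

/-- The set of `D`-descents of `p`: those `i ∈ {0,…,n-1}` with `π_i > π_{i+1}`. -/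
def ddes {n : ℕ} (p : SignedPerm n) : Finset ℕ :=
  (Finset.range n).filter fun i => p.entry (i + 1) < p.entry i

/-- The number of `D`-descents of `p`. -/
def d {n : ℕ} (p : SignedPerm n) : ℕ := p.ddes.card

/-- Membership in the type `D` Coxeter group `D_n ⊆ B_n`:
the number of negative letters is even. -/
def inD {n : ℕ} (p : SignedPerm n) : Prop :=
  Even (Finset.univ.filter (fun i => p.2 i = true)).card

/-- Type '1': descent at position `1` but not at `0`. -/
def type1 {n : ℕ} (p : SignedPerm n) : Prop := 1 ∈ p.ddes ∧ 0 ∉ p.ddes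

/-- Type '0,1': descents at both positions `0` and `1`. -/
def type01 {n : ℕ} (p : SignedPerm n) : Prop := 0 ∈ p.ddes ∧ 1 ∈ p.ddes

/-- Type '≥2': no descent at positions `0` and `1`. -/
def typeGe2 {n : ℕ} (p : SignedPerm n) : Prop := 0 ∉ p.ddes ∧ 1 ∉ p.ddes

/-- Type '0,≥2': descent at position `0` but not at `1`. -/
def type0Ge2 {n : ℕ} (p : SignedPerm n) : Prop := 0 ∈ p.ddes ∧ 1 ∉ p.ddes

instance {n : ℕ} (p : SignedPerm n) : Decidable p.inD := by
  unfold SignedPerm.inD; infer_instance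
instance {n : ℕ} (p : SignedPerm n) : Decidable p.type1 := by
  unfold SignedPerm.type1; infer_instance
instance {n : ℕ} (p : SignedPerm n) : Decidable p.type01 := by
  unfold SignedPerm.type01; infer_instance
instance {n : ℕ} (p : SignedPerm n) : Decidable p.typeGe2 := by
  unfold SignedPerm.typeGe2; infer_instance
instance {n : ℕ} (p : SignedPerm n) : Decidable p.type0Ge2 := by
  unfold SignedPerm.type0Ge2; infer_instance

end SignedPerm

/-- The type `D` Eulerian number `D_{n,k}`: the number of elements of `D_n`
with exactly `k` `D`-descents (zero for `k < 0`). -/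
def eulerD (n : ℕ) (k : ℤ) : ℕ :=
  (Finset.univ.filter fun p : SignedPerm n => p.inD ∧ (p.d : ℤ) = k).card

/-- The sub-Eulerian number `D_{n,k}^1`. -/
def subEuler1 (n : ℕ) (k : ℤ) : ℕ :=
  (Finset.univ.filter fun p : SignedPerm n => p.inD ∧ p.type1 ∧ (p.d : ℤ) = k).card

/-- The sub-Eulerian number `D_{n,k}^{0,1}`. -/
def subEuler01 (n : ℕ) (k : ℤ) : ℕ :=
  (Finset.univ.filter fun p : SignedPerm n => p.inD ∧ p.type01 ∧ (p.d : ℤ) = k).card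

/-- The sub-Eulerian number `D_{n,k}^{≥2}`. -/
def subEulerGe2 (n : ℕ) (k : ℤ) : ℕ :=
  (Finset.univ.filter fun p : SignedPerm n => p.inD ∧ p.typeGe2 ∧ (p.d : ℤ) = k).card

/-- The sub-Eulerian number `D_{n,k}^{0,≥2}`. -/
def subEuler0Ge2 (n : ℕ) (k : ℤ) : ℕ :=
  (Finset.univ.filter fun p : SignedPerm n => p.inD ∧ p.type0Ge2 ∧ (p.d : ℤ) = k).card

/-- The type `D` Eulerian polynomial `D_n(t) = Σ_{π ∈ D_n} t^{d(π)}`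
(with `D_0(t) = D_1(t) = 1`). -/
noncomputable def polyD (n : ℕ) : Polynomial ℚ :=
  ∑ p ∈ Finset.univ.filter (fun p : SignedPerm n => p.inD), Polynomial.X ^ p.d

/-- The sub-Eulerian polynomial `D_n^1(t)`. -/
noncomputable def polyD1 (n : ℕ) : Polynomial ℚ :=
  ∑ p ∈ Finset.univ.filter (fun p : SignedPerm n => p.inD ∧ p.type1), Polynomial.X ^ p.d

/-- The sub-Eulerian polynomial `D_n^{0,1}(t)`. -/
noncomputable def polyD01 (n : ℕ) : Polynomial ℚ :=
  ∑ p ∈ Finset.univ.filter (fun p : SignedPerm n => p.inD ∧ p.type01), Polynomial.X ^ p.d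

/-- The sub-Eulerian polynomial `D_n^{≥2}(t)`. -/
noncomputable def polyDGe2 (n : ℕ) : Polynomial ℚ :=
  ∑ p ∈ Finset.univ.filter (fun p : SignedPerm n => p.inD ∧ p.typeGe2), Polynomial.X ^ p.d

/-- The sub-Eulerian polynomial `D_n^{0,≥2}(t)`. -/
noncomputable def polyD0Ge2 (n : ℕ) : Polynomial ℚ :=
  ∑ p ∈ Finset.univ.filter (fun p : SignedPerm n => p.inD ∧ p.type0Ge2), Polynomial.X ^ p.d

/-!
Changing the sign of the letter `±1` preserves the `D`-descents and exchanges `D_n` with its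
complement in `B_n`, so every `D`-Eulerian count is half of the same count over `B_n`. There the
letter `±n` can be inserted freely into the word of some `p ∈ B_{n-1}`. In the first place it never
gives type '0,1'. In the second place it does so exactly for `-n`, whatever the type of `p`, and
then `0` and `1` become descents. In any later place the type of `p` is kept: strictly inside the
word the letter adds a descent unless it lands on an existing one, and at the end exactly `-n` adds
one.
-/

/-- The map of `ℤ` that exchanges `1` and `-1` and fixes every other integer: the effect on letters
of changing the sign of `±1` in a word. -/
def negUnit (x : ℤ) : ℤ := if |x| = 1 then -x else x

lemma negUnit_neg (x : ℤ) : negUnit (-x) = -negUnit x := by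
  simp only [negUnit, abs_neg, apply_ite Neg.neg]

lemma negUnit_lt_negUnit {x y : ℤ} (hx : x ≠ 0) (hy : y ≠ 0) (hxy : |x| ≠ |y|) :
    negUnit x < negUnit y ↔ x < y := by
  grind [negUnit]

open Finset in
lemma sum_range_succ_add_sum_range {M : Type*} [AddCommMonoid M] {a b : ℕ → M} {j m : ℕ}
    (hjm : j ≤ m) (hab : ∀ i, j ≤ i → i < m → b (i + 1) = a i) :
    ∑ i ∈ range (m + 1), b i + ∑ i ∈ range j, a i =
      ∑ i ∈ range m, a i + ∑ i ∈ range (j + 1), b i := by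
  induction m, hjm using Nat.le_induction with
  | base => exact add_comm _ _
  | succ m hjm ih =>
    have ih := ih fun i hji him => hab i hji (him.trans m.lt_succ_self)
    rw [sum_range_succ b (m + 1), sum_range_succ a m, add_right_comm, ih, add_right_comm,
      hab m hjm m.lt_succ_self]

namespace SignedPerm

open Finset

section Words

variable {n : ℕ} (p : SignedPerm n)

lemma word_of_notMem {j : ℕ} (hj : j ∉ Icc 1 n) : p.word j = 0 :=
  dif_neg (by rwa [mem_Icc] at hj)

lemma word_succ (i : Fin n) : p.word (i + 1) = (if p.2 i then -1 else 1) * ((p.1 i : ℕ) + 1) := by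
  simp [word]

lemma abs_word_succ (i : Fin n) : |p.word (i + 1)| = (p.1 i : ℕ) + 1 := by
  rw [word_succ, abs_mul, abs_of_nonneg (a := ((p.1 i : ℕ) + 1 : ℤ)) (by positivity)]
  split_ifs <;> simp

lemma exists_eq_succ {j : ℕ} (hj : j ∈ Icc 1 n) : ∃ i : Fin n, j = i + 1 := by
  rw [mem_Icc] at hj
  exact ⟨⟨j - 1, by omega⟩, by simp only; omega⟩

lemma abs_word_le (j : ℕ) : |p.word j| ≤ n := by
  by_cases hj : j ∈ Icc 1 n
  · obtain ⟨i, rfl⟩ := exists_eq_succ hj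
    rw [abs_word_succ]
    exact_mod_cast (p.1 i).isLt
  · simp [p.word_of_notMem hj]

lemma word_ne_zero {j : ℕ} (hj : j ∈ Icc 1 n) : p.word j ≠ 0 := by
  obtain ⟨i, rfl⟩ := exists_eq_succ hj
  rw [← abs_pos, abs_word_succ]
  positivity

lemma abs_word_ne {i j : ℕ} (hi : i ∈ Icc 1 n) (hj : j ∈ Icc 1 n) (hij : i ≠ j) :
    |p.word i| ≠ |p.word j| := by
  obtain ⟨i, rfl⟩ := exists_eq_succ hi
  obtain ⟨j, rfl⟩ := exists_eq_succ hj
  rw [abs_word_succ, abs_word_succ]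
  contrapose! hij
  have : p.1 i = p.1 j := Fin.ext (by exact_mod_cast add_right_cancel hij)
  rw [p.1.injective this]

lemma entry_of_pos {j : ℕ} (hj : 1 ≤ j) : p.entry j = p.word j :=
  if_neg (Nat.one_le_iff_ne_zero.1 hj)

lemma mem_ddes {i : ℕ} : i ∈ p.ddes ↔ i < n ∧ p.entry (i + 1) < p.entry i := by
  simp [ddes]

lemma zero_mem_ddes (hn : 0 < n) : 0 ∈ p.ddes ↔ p.word 1 < -p.word 2 := by
  simp [mem_ddes, hn, entry]

lemma mem_ddes_of_pos {i : ℕ} (hi : 1 ≤ i) :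
    i ∈ p.ddes ↔ i < n ∧ p.word (i + 1) < p.word i := by
  rw [mem_ddes, entry_of_pos _ i.succ_pos, entry_of_pos _ hi]

lemma ddes_subset : p.ddes ⊆ range n := filter_subset _ _

lemma sum_range_ite_mem_ddes {R : Type*} [Ring R] (x y : R) :
    ∑ i ∈ range n, (if i ∈ p.ddes then x else y) = p.d * x + (n - p.d) * y := by
  have hle : #p.ddes ≤ n := by simpa using card_le_card p.ddes_subset
  have hmem : {i ∈ range n | i ∈ p.ddes} = p.ddes := by
    rw [filter_mem_eq_inter, inter_eq_right.2 p.ddes_subset]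
  have hnot : {i ∈ range n | i ∉ p.ddes} = range n \ p.ddes := by
    rw [filter_notMem_eq_sdiff]
  rw [sum_ite, hmem, hnot, sum_const, sum_const, card_sdiff_of_subset p.ddes_subset, card_range,
    nsmul_eq_mul, nsmul_eq_mul, Nat.cast_sub hle, d]

lemma d_eq_sum : p.d = ∑ i ∈ range n, if i ∈ p.ddes then 1 else 0 := by
  have := p.sum_range_ite_mem_ddes (1 : ℤ) 0
  zify
  simpa using this.symm

end Words

section Flip

variable {n : ℕ}

/-- The signed permutation obtained from `p` by changing the sign of the letter `±1`: an
involution exchanging `D_n` with its complement in `B_n`. -/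
def flipOne (p : SignedPerm n) : SignedPerm n :=
  (p.1, fun i => if (p.1 i : ℕ) = 0 then !p.2 i else p.2 i)

lemma flipOne_involutive : Function.Involutive (flipOne (n := n)) := fun p =>
  Prod.ext rfl <| funext fun i => by
    by_cases h : (p.1 i : ℕ) = 0 <;> simp [flipOne, h]

lemma word_flipOne (p : SignedPerm n) (j : ℕ) : p.flipOne.word j = negUnit (p.word j) := by
  by_cases hj : j ∈ Icc 1 n
  · obtain ⟨i, rfl⟩ := exists_eq_succ hj
    have habs : |p.word (i + 1)| = 1 ↔ (p.1 i : ℕ) = 0 := by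
      rw [abs_word_succ]
      omega
    simp only [negUnit, habs]
    simp only [word_succ, flipOne]
    by_cases hi : (p.1 i : ℕ) = 0 <;> by_cases hs : p.2 i = true <;> simp [hi, hs]
  · simp [word_of_notMem _ hj, negUnit]

lemma entry_flipOne (p : SignedPerm n) (j : ℕ) : p.flipOne.entry j = negUnit (p.entry j) := by
  simp only [entry, word_flipOne, ← negUnit_neg, ← apply_ite negUnit]

lemma ddes_flipOne (hn : 2 ≤ n) (p : SignedPerm n) : p.flipOne.ddes = p.ddes := by
  ext i
  simp only [mem_ddes, entry_flipOne]
  refine and_congr_right fun hi => ?_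
  have hsucc : i + 1 ∈ Icc 1 n := by rw [mem_Icc]; omega
  rcases Nat.eq_zero_or_pos i with rfl | hpos
  · have htwo : 2 ∈ Icc 1 n := by rw [mem_Icc]; omega
    refine negUnit_lt_negUnit (p.word_ne_zero hsucc) (neg_ne_zero.2 (p.word_ne_zero htwo)) ?_
    exact (p.abs_word_ne hsucc htwo (by decide)).trans_eq (abs_neg _).symm
  · have hmem : i ∈ Icc 1 n := by rw [mem_Icc]; omega
    rw [entry_of_pos _ i.succ_pos, entry_of_pos _ hpos]
    exact negUnit_lt_negUnit (p.word_ne_zero hsucc) (p.word_ne_zero hmem)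
      (p.abs_word_ne hsucc hmem i.succ_ne_self)

lemma inD_flipOne (hn : 0 < n) (p : SignedPerm n) : p.flipOne.inD ↔ ¬ p.inD := by
  obtain ⟨z, hz⟩ := p.1.surjective ⟨0, hn⟩
  have hval (i : Fin n) : (p.1 i : ℕ) = 0 ↔ i = z := by
    rw [← p.1.apply_eq_iff_eq, hz, Fin.ext_iff]
  unfold inD
  cases hsign : p.2 z
  · have hset : univ.filter (p.flipOne.2 · = true) = insert z (univ.filter (p.2 · = true)) := by
      ext i
      by_cases hi : i = z <;> simp [flipOne, hval, hi, hsign]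
    rw [hset, card_insert_of_notMem (by simp [hsign]), Nat.even_add_one]
  · have hset : univ.filter (p.2 · = true) = insert z (univ.filter (p.flipOne.2 · = true)) := by
      ext i
      by_cases hi : i = z <;> simp [flipOne, hval, hi, hsign]
    rw [hset, card_insert_of_notMem (by simp [flipOne, hval, hsign]), Nat.even_add_one, not_not]

lemma two_mul_card_inD (hn : 0 < n) (Q : SignedPerm n → Prop) [DecidablePred Q]
    (hQ : ∀ p : SignedPerm n, Q p.flipOne ↔ Q p) :
    2 * #{p : SignedPerm n | p.inD ∧ Q p} = #{p : SignedPerm n | Q p} := by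
  have hflip : #{p : SignedPerm n | p.inD ∧ Q p} = #{p : SignedPerm n | ¬ p.inD ∧ Q p} :=
    card_equiv flipOne_involutive.toPerm fun p => by simp [inD_flipOne hn, hQ]
  rw [← card_filter_add_card_filter_not (s := {p : SignedPerm n | Q p}) inD, filter_filter,
    filter_filter, two_mul]
  simp only [and_comm (a := Q _)]
  rw [← hflip]

lemma two_mul_card_inD_and_d_eq (hn : 2 ≤ n) (k : ℤ) (T : SignedPerm n → Prop) [DecidablePred T]
    (hT : ∀ p : SignedPerm n, T p.flipOne ↔ T p) :
    2 * (#{p : SignedPerm n | p.inD ∧ T p ∧ (p.d : ℤ) = k} : ℤ) =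
      ∑ p : SignedPerm n with T p, if (p.d : ℤ) = k then 1 else 0 := by
  have hcard := two_mul_card_inD (by omega) (fun p : SignedPerm n => T p ∧ (p.d : ℤ) = k)
    fun p => by simp only [hT, d, ddes_flipOne hn]
  rw [sum_boole, filter_filter, ← hcard]
  push_cast
  rfl

lemma two_mul_subEuler01 (hn : 2 ≤ n) (k : ℤ) :
    2 * (subEuler01 n k : ℤ) =
      ∑ p : SignedPerm n with p.type01, if (p.d : ℤ) = k then 1 else 0 :=
  two_mul_card_inD_and_d_eq hn k type01 fun p => by simp only [type01, ddes_flipOne hn]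

lemma two_mul_subEuler1 (hn : 2 ≤ n) (k : ℤ) :
    2 * (subEuler1 n k : ℤ) =
      ∑ p : SignedPerm n with p.type1, if (p.d : ℤ) = k then 1 else 0 :=
  two_mul_card_inD_and_d_eq hn k type1 fun p => by simp only [type1, ddes_flipOne hn]

lemma two_mul_subEulerGe2 (hn : 2 ≤ n) (k : ℤ) :
    2 * (subEulerGe2 n k : ℤ) =
      ∑ p : SignedPerm n with p.typeGe2, if (p.d : ℤ) = k then 1 else 0 :=
  two_mul_card_inD_and_d_eq hn k typeGe2 fun p => by simp only [typeGe2, ddes_flipOne hn]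

lemma two_mul_subEuler0Ge2 (hn : 2 ≤ n) (k : ℤ) :
    2 * (subEuler0Ge2 n k : ℤ) =
      ∑ p : SignedPerm n with p.type0Ge2, if (p.d : ℤ) = k then 1 else 0 :=
  two_mul_card_inD_and_d_eq hn k type0Ge2 fun p => by simp only [type0Ge2, ddes_flipOne hn]

end Flip

section InsertMax

variable {m : ℕ}

/-- The signed permutation of `{1,…,m+1}` whose word is that of `p` with the letter `m + 1`
(`-(m + 1)` if `s` is true) inserted right after its first `j` letters. -/
def insertMax (p : SignedPerm m) (j : Fin (m + 1)) (s : Bool) : SignedPerm (m + 1) :=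
  (((finSuccEquiv' j).trans p.1.optionCongr).trans (finSuccEquiv' (Fin.last m)).symm,
    j.insertNth (α := fun _ => Bool) s p.2)

variable (p : SignedPerm m) (j : Fin (m + 1)) (s : Bool)

lemma insertMax_fst_self : (p.insertMax j s).1 j = Fin.last m := by
  simp [insertMax]

lemma insertMax_snd_self : (p.insertMax j s).2 j = s := by
  simp [insertMax]

lemma insertMax_fst_succAbove (i : Fin m) :
    (p.insertMax j s).1 (j.succAbove i) = (p.1 i).castSucc := by
  simp [insertMax]

lemma insertMax_snd_succAbove (i : Fin m) : (p.insertMax j s).2 (j.succAbove i) = p.2 i := by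
  simp [insertMax]

lemma insertMax_injective : Function.Injective
    fun x : SignedPerm m × Fin (m + 1) × Bool => x.1.insertMax x.2.1 x.2.2 := by
  rintro ⟨p, j, s⟩ ⟨q, j', s'⟩ (h : p.insertMax j s = q.insertMax j' s')
  obtain rfl : j = j' := by
    apply (q.insertMax j' s').1.injective
    rw [insertMax_fst_self, ← h, insertMax_fst_self]
  obtain rfl : s = s' := by
    rw [← insertMax_snd_self p j s, h, insertMax_snd_self]
  obtain rfl : p = q := by
    refine Prod.ext (Equiv.ext fun i => Fin.castSucc_injective m ?_) (funext fun i => ?_)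
    · rw [← insertMax_fst_succAbove p j s, h, insertMax_fst_succAbove]
    · rw [← insertMax_snd_succAbove p j s, h, insertMax_snd_succAbove]
  rfl

lemma insertMax_bijective : Function.Bijective
    fun x : SignedPerm m × Fin (m + 1) × Bool => x.1.insertMax x.2.1 x.2.2 := by
  refine (Fintype.bijective_iff_injective_and_card _).2 ⟨insertMax_injective, ?_⟩
  simp only [Fintype.card_prod, Fintype.card_perm, Fintype.card_fin, Fintype.card_bool,
    Fintype.card_pi, prod_const, card_univ, Nat.factorial_succ, pow_succ]
  ring

lemma sum_eq_sum_insertMax {M : Type*} [AddCommMonoid M] (F : SignedPerm (m + 1) → M) :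
    ∑ q, F q = ∑ p : SignedPerm m, ∑ j, ∑ s, F (p.insertMax j s) := by
  simp only [← insertMax_bijective.sum_comp, Fintype.sum_prod_type]

lemma word_insertMax_of_le {i : ℕ} (hi : i ≤ j) : (p.insertMax j s).word i = p.word i := by
  rcases Nat.eq_zero_or_pos i with rfl | hpos
  · rw [word_of_notMem _ (by simp), word_of_notMem _ (by simp)]
  obtain ⟨i, rfl⟩ : ∃ i' : Fin m, i = i' + 1 := exists_eq_succ (by rw [mem_Icc]; omega)
  have hindex : j.succAbove i = i.castSucc := Fin.succAbove_of_castSucc_lt _ _ (by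
    rw [Fin.lt_def, Fin.val_castSucc]; omega)
  have h := (p.insertMax j s).word_succ (j.succAbove i)
  rwa [insertMax_fst_succAbove, insertMax_snd_succAbove, hindex, Fin.val_castSucc, Fin.val_castSucc,
    ← word_succ] at h

lemma word_insertMax_self :
    (p.insertMax j s).word (j + 1) = (if s then -1 else 1) * ((m : ℤ) + 1) := by
  rw [word_succ, insertMax_fst_self, insertMax_snd_self, Fin.val_last]

lemma word_insertMax_succ_of_lt {i : ℕ} (hi : j < i) :
    (p.insertMax j s).word (i + 1) = p.word i := by
  rcases lt_or_ge m i with hm | hm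
  · rw [word_of_notMem _ (by simp [hm]), word_of_notMem _ (by simp [hm])]
  obtain ⟨i, rfl⟩ : ∃ i' : Fin m, i = i' + 1 := exists_eq_succ (by rw [mem_Icc]; omega)
  have hindex : j.succAbove i = i.succ := Fin.succAbove_of_le_castSucc _ _ (by
    rw [Fin.le_def, Fin.val_castSucc]; omega)
  have h := (p.insertMax j s).word_succ (j.succAbove i)
  rwa [insertMax_fst_succAbove, insertMax_snd_succAbove, hindex, Fin.val_castSucc, Fin.val_succ,
    ← word_succ] at h

variable {j}

lemma mem_ddes_insertMax_of_lt {i : ℕ} (hj : 2 ≤ (j : ℕ)) (hi : i < j) :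
    i ∈ (p.insertMax j s).ddes ↔ i ∈ p.ddes := by
  rcases Nat.eq_zero_or_pos i with rfl | hpos
  · rw [zero_mem_ddes _ m.succ_pos, zero_mem_ddes _ (by omega), word_insertMax_of_le _ _ _ hj,
      word_insertMax_of_le _ _ _ (by omega)]
  · rw [mem_ddes_of_pos _ hpos, mem_ddes_of_pos _ hpos, word_insertMax_of_le _ _ _ hi,
      word_insertMax_of_le _ _ _ hi.le]
    exact and_congr_left' (by omega)

lemma zero_mem_ddes_insertMax (hj : (j : ℕ) ≤ 1) : 0 ∈ (p.insertMax j s).ddes ↔ s = true := by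
  have hself := p.word_insertMax_self j s
  have hbound := abs_le.1 (p.abs_word_le 1)
  rw [zero_mem_ddes _ m.succ_pos]
  rcases Nat.le_one_iff_eq_zero_or_eq_one.1 hj with h | h
  · rw [h, zero_add] at hself
    rw [hself, p.word_insertMax_succ_of_lt j s (i := 1) (by omega)]
    cases s <;> grind
  · rw [h] at hself
    rw [hself, p.word_insertMax_of_le j s h.ge]
    cases s <;> grind

lemma mem_ddes_insertMax_self (hj : 1 ≤ (j : ℕ)) :
    (j : ℕ) ∈ (p.insertMax j s).ddes ↔ s = true := by
  have hbound := abs_le.1 (p.abs_word_le j)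
  rw [mem_ddes_of_pos _ hj, word_insertMax_self, word_insertMax_of_le _ _ _ le_rfl]
  cases s <;> grind

lemma succ_mem_ddes_insertMax (hj : (j : ℕ) < m) :
    (j + 1 : ℕ) ∈ (p.insertMax j s).ddes ↔ s = false := by
  have hbound := abs_le.1 (p.abs_word_le (j + 1))
  rw [mem_ddes_of_pos _ (by omega), word_insertMax_self,
    word_insertMax_succ_of_lt _ _ _ (Nat.lt_succ_self _)]
  cases s <;> grind

lemma succ_mem_ddes_insertMax_of_lt {i : ℕ} (hi : j < i) :
    i + 1 ∈ (p.insertMax j s).ddes ↔ i ∈ p.ddes := by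
  rw [mem_ddes_of_pos _ (by omega), mem_ddes_of_pos _ (by omega),
    word_insertMax_succ_of_lt _ _ _ hi, word_insertMax_succ_of_lt _ _ _ (by omega)]
  exact and_congr_left' Nat.succ_lt_succ_iff

-- To the right of the inserted letter the descents are only shifted, so the change in their number
-- is read off the first `j + 2` positions.
lemma d_insertMax_add_sum (hj : (j : ℕ) < m) :
    (p.insertMax j s).d + ∑ i ∈ range (j + 1), (if i ∈ p.ddes then 1 else 0) =
      p.d + ∑ i ∈ range (j + 2), if i ∈ (p.insertMax j s).ddes then 1 else 0 := by
  rw [d_eq_sum, d_eq_sum]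
  exact sum_range_succ_add_sum_range hj fun i hi _ => by
    simp only [succ_mem_ddes_insertMax_of_lt p s hi]

lemma d_insertMax_of_lt (hj : 2 ≤ (j : ℕ)) (hjm : (j : ℕ) < m) :
    (p.insertMax j s).d + (if (j : ℕ) ∈ p.ddes then 1 else 0) = p.d + 1 := by
  have hprefix : ∑ i ∈ range j, (if i ∈ (p.insertMax j s).ddes then 1 else 0) =
      ∑ i ∈ range j, if i ∈ p.ddes then 1 else 0 :=
    sum_congr rfl fun i hi => by
      simp only [mem_ddes_insertMax_of_lt p s hj (mem_range.1 hi)]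
  have h := p.d_insertMax_add_sum s hjm
  simp only [sum_range_succ, hprefix, mem_ddes_insertMax_self p s (by omega : 1 ≤ (j : ℕ)),
    succ_mem_ddes_insertMax p s hjm] at h
  grind

lemma d_insertMax_last (hm : 2 ≤ m) :
    (p.insertMax (Fin.last m) s).d = p.d + if s then 1 else 0 := by
  have hself := p.mem_ddes_insertMax_self s (j := Fin.last m) (by rw [Fin.val_last]; omega)
  rw [Fin.val_last] at hself
  simp only [d_eq_sum, sum_range_succ, hself]
  congr 1
  exact sum_congr rfl fun i hi => by
    simp only [mem_ddes_insertMax_of_lt p s (j := Fin.last m) hm (mem_range.1 hi)]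

lemma d_insertMax_one (hj : (j : ℕ) = 1) (hm : 2 ≤ m) :
    (p.insertMax j true).d + ((if 0 ∈ p.ddes then 1 else 0) + if 1 ∈ p.ddes then 1 else 0) =
      p.d + 2 := by
  have h := p.d_insertMax_add_sum true (j := j) (by omega)
  have hself := p.mem_ddes_insertMax_self true hj.ge
  have hsucc := p.succ_mem_ddes_insertMax true (j := j) (by omega)
  rw [hj] at h hself hsucc
  simp only [sum_range_succ, range_zero, sum_empty, zero_add, hself, hsucc,
    p.zero_mem_ddes_insertMax true hj.le] at h
  simpa using h

lemma type01_insertMax_zero (hm : 1 ≤ m) : ¬ (p.insertMax 0 s).type01 := by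
  rintro ⟨hzero, hone⟩
  rw [zero_mem_ddes_insertMax p s (by simp)] at hzero
  have := (p.succ_mem_ddes_insertMax s (j := 0) (by simpa)).1 (by simpa)
  simp_all

lemma type01_insertMax_one (hj : (j : ℕ) = 1) : (p.insertMax j s).type01 ↔ s = true := by
  have hself := p.mem_ddes_insertMax_self s hj.ge
  rw [hj] at hself
  rw [type01, zero_mem_ddes_insertMax p s hj.le, hself, and_self]

lemma type01_insertMax_of_two_le (hj : 2 ≤ (j : ℕ)) :
    (p.insertMax j s).type01 ↔ p.type01 := by
  rw [type01, type01, mem_ddes_insertMax_of_lt p s hj (by omega),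
    mem_ddes_insertMax_of_lt p s hj (by omega)]

end InsertMax

section Count

variable {m : ℕ} (p : SignedPerm m)

section AddCommMonoid

variable {M : Type*} [AddCommMonoid M] (f : ℕ → M)

lemma sum_type01_insertMax_of_lt {j : Fin (m + 1)} (hj : 2 ≤ (j : ℕ)) (hjm : (j : ℕ) < m) :
    ∑ s, (if (p.insertMax j s).type01 then f (p.insertMax j s).d else 0) =
      if p.type01 then (if (j : ℕ) ∈ p.ddes then 2 • f p.d else 2 • f (p.d + 1)) else 0 := by
  have hd (s : Bool) : f (p.insertMax j s).d =
      if (j : ℕ) ∈ p.ddes then f p.d else f (p.d + 1) := by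
    have h := p.d_insertMax_of_lt s hj hjm
    split_ifs at h ⊢ <;> exact congrArg f (by omega)
  simp only [type01_insertMax_of_two_le p _ hj, hd, Fintype.sum_bool, ← two_nsmul, smul_ite,
    smul_zero]

lemma sum_type01_insertMax_last (hm : 2 ≤ m) :
    ∑ s, (if (p.insertMax (Fin.last m) s).type01 then f (p.insertMax (Fin.last m) s).d else 0) =
      if p.type01 then f p.d + f (p.d + 1) else 0 := by
  simp only [type01_insertMax_of_two_le p _ (j := Fin.last m) hm, d_insertMax_last p _ hm,
    Fintype.sum_bool, if_true, Bool.false_eq_true, if_false, add_zero]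
  split_ifs
  · exact add_comm _ _
  · exact add_zero _

lemma sum_type01_insertMax_zero (hm : 1 ≤ m) :
    ∑ s, (if (p.insertMax 0 s).type01 then f (p.insertMax 0 s).d else 0) = 0 := by
  simp only [type01_insertMax_zero p _ hm, if_false, sum_const_zero]

lemma sum_type01_insertMax_one (hm : 2 ≤ m) {j : Fin (m + 1)} (hj : (j : ℕ) = 1) :
    ∑ s, (if (p.insertMax j s).type01 then f (p.insertMax j s).d else 0) =
      (if p.type01 then f p.d else 0) + (if p.type1 then f (p.d + 1) else 0)
        + (if p.typeGe2 then f (p.d + 2) else 0)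
        + (if p.type0Ge2 then f (p.d + 1) else 0) := by
  have hd := p.d_insertMax_one hj hm
  simp only [type01_insertMax_one p _ hj, Fintype.sum_bool, if_true, Bool.false_eq_true, if_false,
    add_zero]
  simp only [type01, type1, typeGe2, type0Ge2]
  by_cases h0 : 0 ∈ p.ddes <;> by_cases h1 : 1 ∈ p.ddes <;>
    simp only [h0, h1, if_true, if_false, add_zero, zero_add, and_self, and_true, and_false,
      not_true_eq_false, not_false_eq_true] at hd ⊢ <;>
    exact congrArg f (by omega)

end AddCommMonoid

variable {R : Type*} [CommRing R] (f : ℕ → R)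

lemma sum_range_ite_add_two_mem_ddes {t : ℕ} (p : SignedPerm (t + 2)) (hp : p.type01) (x y : R) :
    ∑ i ∈ range t, (if i + 2 ∈ p.ddes then x else y) = (p.d - 2) * x + (t + 2 - p.d) * y := by
  have h := p.sum_range_ite_mem_ddes x y
  rw [sum_range_succ', sum_range_succ', if_pos hp.1, if_pos hp.2] at h
  push_cast at h
  linear_combination h

lemma sum_type01_insertMax (hm : 2 ≤ m) :
    ∑ j, ∑ s, (if (p.insertMax j s).type01 then f (p.insertMax j s).d else 0) =
      (if p.type01 then 2 * (p.d - 1) * f p.d + (2 * (m - p.d) + 1) * f (p.d + 1) else 0)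
        + (if p.type1 then f (p.d + 1) else 0) + (if p.typeGe2 then f (p.d + 2) else 0)
        + (if p.type0Ge2 then f (p.d + 1) else 0) := by
  obtain ⟨t, rfl⟩ := Nat.exists_eq_add_of_le' hm
  have hmiddle (i : Fin t) := p.sum_type01_insertMax_of_lt f (j := i.castSucc.succ.succ) (by simp)
    (by simp)
  rw [Fin.sum_univ_succ, Fin.sum_univ_succ, Fin.sum_univ_castSucc,
    sum_type01_insertMax_zero p f (by omega), sum_type01_insertMax_one p f hm (by simp)]
  simp only [hmiddle, Fin.succ_last, sum_type01_insertMax_last p f hm, Fin.val_succ,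
    Fin.val_castSucc]
  by_cases hp : p.type01
  · simp only [if_pos hp]
    rw [Fin.sum_univ_eq_sum_range fun i =>
        if i + 1 + 1 ∈ p.ddes then 2 • f p.d else 2 • f (p.d + 1),
      sum_range_ite_add_two_mem_ddes p hp]
    simp only [nsmul_eq_mul]
    push_cast
    ring
  · simp only [if_neg hp, sum_const_zero]
    ring

lemma sum_type01_succ (hm : 2 ≤ m) :
    ∑ q : SignedPerm (m + 1) with q.type01, f q.d =
      ∑ p : SignedPerm m with p.type01,
          (2 * (p.d - 1) * f p.d + (2 * (m - p.d) + 1) * f (p.d + 1))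
        + ∑ p : SignedPerm m with p.type1, f (p.d + 1)
        + ∑ p : SignedPerm m with p.typeGe2, f (p.d + 2)
        + ∑ p : SignedPerm m with p.type0Ge2, f (p.d + 1) := by
  simp only [sum_filter, ← sum_add_distrib, sum_eq_sum_insertMax, sum_type01_insertMax _ f hm]

end Count

end SignedPerm

/-- **Proposition 3.2 (ii).** Recurrence for the sub-Eulerian numbers `D_{n,k}^{0,1}`. -/
theorem subEuler01_recurrence (n : ℕ) (hn : 3 ≤ n) (k : ℤ) :
    (subEuler01 n k : ℤ) =
      2 * (k - 1) * subEuler01 (n - 1) k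
        + (2 * (n : ℤ) - 2 * k + 1) * subEuler01 (n - 1) (k - 1)
        + subEuler1 (n - 1) (k - 1) + subEulerGe2 (n - 1) (k - 2)
        + subEuler0Ge2 (n - 1) (k - 1) := by
  obtain ⟨m, rfl⟩ : ∃ m, n = m + 1 := ⟨n - 1, by omega⟩
  rw [Nat.add_sub_cancel]
  have hm : 2 ≤ m := by omega
  have hweight (d : ℕ) : 2 * ((d : ℤ) - 1) * (if (d : ℤ) = k then 1 else 0) +
      (2 * (m - d) + 1) * (if ((d + 1 : ℕ) : ℤ) = k then 1 else 0) =
      2 * (k - 1) * (if (d : ℤ) = k then 1 else 0) +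
        (2 * ((m + 1 : ℕ) : ℤ) - 2 * k + 1) * (if (d : ℤ) = k - 1 then 1 else 0) := by
    split_ifs <;> grind
  have hone (d : ℕ) : ((d + 1 : ℕ) : ℤ) = k ↔ (d : ℤ) = k - 1 := by omega
  have htwo (d : ℕ) : ((d + 2 : ℕ) : ℤ) = k ↔ (d : ℤ) = k - 2 := by omega
  have hsum := SignedPerm.sum_type01_succ (fun d => if (d : ℤ) = k then (1 : ℤ) else 0) hm
  simp only [hweight, htwo] at hsum
  simp only [hone, Finset.sum_add_distrib, ← Finset.mul_sum,
    ← SignedPerm.two_mul_subEuler01 hm, ← SignedPerm.two_mul_subEuler1 hm,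
    ← SignedPerm.two_mul_subEulerGe2 hm, ← SignedPerm.two_mul_subEuler0Ge2 hm,
    ← SignedPerm.two_mul_subEuler01 (hm.trans m.le_succ)] at hsum
  linarith
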